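/- Let 0 < a ≤ d, u = x_1^a x_2^{d−a} and v = x_1^a x_n^{d−a}, and let I = (L(u,v)) be the corresponding lexsegment ideal in S = K[x_1,…,x_n]. Then for every N ≥ 1 the power I^N has linear quotients. -/

import Mathlib

/-!
A monomial of degree `d` lies in `L(u,v)` exactly when its `x_1`-exponent is `a`
(`mem_LSeg_iff`), so every generator of `I^N` has `x_1`-exponent `N * a` and degree `N * d`.

The generators are listed in decreasing lexicographic order. Let `uj >_lex ui` be generators, and
let `q` be the first index where they differ, so that `ui q < uj q`. The degrees agree, hence some
`p > q` has `uj p < ui p` (`exists_lt_of_first_diff`). Neither `q` nor `p` is the index of `x_1`,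
so replacing one factor `x_p` by `x_q` in a factor of `ui` that is divisible by `x_p` leaves that
factor in `L(u,v)`. The resulting generator `uk = x_q * ui / x_p` is lexicographically larger than
`ui`, and `uk / gcd(uk, ui) = x_q` divides `uj / gcd(uj, ui)`.
-/


/-- Monomials of `K[x_1,…,x_n]`, encoded by their exponent vectors (`x_1` ↔ index `0`). -/
abbrev Mon (n : ℕ) := Fin n →₀ ℕ

/-- Total degree of a monomial. -/
def mdeg {n : ℕ} (m : Mon n) : ℕ := ∑ i, m i

/-- `m <_lex m'` (so `m' >_lex m`) with `x_1 > x_2 > ⋯ > x_n`: at the first index where the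
exponent vectors differ, `m'` has the larger exponent. -/
def LexLT {n : ℕ} (m m' : Mon n) : Prop :=
  ∃ i : Fin n, (∀ j, j < i → m j = m' j) ∧ m i < m' i

/-- `m ≤_lex m'`. -/
def LexLE {n : ℕ} (m m' : Mon n) : Prop := m = m' ∨ LexLT m m'

/-- `m >_revlex m'` for monomials of equal degree: at the last index where the exponent
vectors differ, `m` has the smaller exponent. -/
def RevLexGT {n : ℕ} (m m' : Mon n) : Prop :=
  ∃ s : Fin n, (∀ t, s < t → m t = m' t) ∧ m s < m' s

/-- The decreasing revlexicographic order on monomials: `m <_σ m'` iff `deg m < deg m'`, or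
the degrees agree and `m >_revlex m'`. -/
def DecRevLexLT {n : ℕ} (m m' : Mon n) : Prop :=
  mdeg m < mdeg m' ∨ (mdeg m = mdeg m' ∧ RevLexGT m m')

/-- The lexsegment set `L(u,v) = {w ∈ M_d : u ≥_lex w ≥_lex v}`. -/
def LSeg {n : ℕ} (u v : Mon n) (d : ℕ) : Set (Mon n) :=
  {w | mdeg w = d ∧ LexLE w u ∧ LexLE v w}

/-- `A` is a lexsegment set inside `M_e`. -/
def IsLexSegmentSet {n : ℕ} (A : Set (Mon n)) (e : ℕ) : Prop :=
  ∃ u v : Mon n, mdeg u = e ∧ mdeg v = e ∧ LexLE v u ∧ A = LSeg u v e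

/-- `(L(u,v))` is a completely lexsegment ideal: for every `k ≥ 0` the `k`-th shadow
`{m·w : m ∈ M_k, w ∈ L(u,v)}` is a lexsegment set in `M_{d+k}`. -/
def IsCompletelyLex {n : ℕ} (u v : Mon n) (d : ℕ) : Prop :=
  ∀ k : ℕ,
    IsLexSegmentSet {w | ∃ m w₀, mdeg m = k ∧ w₀ ∈ LSeg u v d ∧ w = m + w₀} (d + k)

/-- The set of products of `N` monomials from `B`; for `B` a set of monomials of a fixed
degree `d` this is the minimal monomial generating set of `I^N`, `I = (B)`. -/
def prodSet {n : ℕ} (B : Set (Mon n)) (N : ℕ) : Set (Mon n) :=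
  {m | ∃ f : Fin N → Mon n, (∀ i, f i ∈ B) ∧ m = ∑ i, f i}

/-- The equigenerated monomial ideal with (minimal) monomial generating set `G` has linear
quotients with respect to the order given by `prec` (`prec a b` = "`a` is listed before
`b`"): for generators `u_j` before `u_i` there are a generator `u_k` before `u_i` and a
variable `x_q` with `u_k / gcd(u_k,u_i) = x_q` and `x_q ∣ u_j / gcd(u_j,u_i)`. -/
def LinQuotOrder {n : ℕ} (G : Set (Mon n)) (prec : Mon n → Mon n → Prop) : Prop :=
  ∀ uj ∈ G, ∀ ui ∈ G, prec uj ui →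
    ∃ uk ∈ G, prec uk ui ∧ ∃ q : Fin n,
      (∀ p : Fin n, p ≠ q → uk p ≤ ui p) ∧ uk q = ui q + 1 ∧ ui q < uj q

/-- The equigenerated monomial ideal with minimal monomial generating set `G` has linear
quotients (with respect to some linear order of the generators). -/
def HasLinQuot {n : ℕ} (G : Set (Mon n)) : Prop :=
  ∃ prec : Mon n → Mon n → Prop,
    (∀ a ∈ G, ¬ prec a a) ∧
    (∀ a ∈ G, ∀ b ∈ G, ∀ c ∈ G, prec a b → prec b c → prec a c) ∧
    (∀ a ∈ G, ∀ b ∈ G, a ≠ b → prec a b ∨ prec b a) ∧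
    LinQuotOrder G prec

/-- If monomials of equal degree first differ at `i`, with the larger exponent in `m'`, then `m`
has a larger exponent than `m'` at some later index. -/
lemma exists_lt_of_first_diff {n : ℕ} {m m' : Mon n} (hd : mdeg m = mdeg m') {i : Fin n}
    (h : ∀ j, j < i → m j = m' j) (hi : m i < m' i) : ∃ p, i < p ∧ m' p < m p := by
  by_contra! hc
  refine absurd hd (ne_of_lt (Finset.sum_lt_sum (fun k _ => ?_) ⟨i, Finset.mem_univ _, hi⟩))
  rcases lt_trichotomy k i with hk | rfl | hk
  · exact (h k hk).le
  · exact hi.le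
  · exact hc k hk

lemma LexLT.irrefl {n : ℕ} (m : Mon n) : ¬ LexLT m m := fun ⟨_, _, h⟩ => lt_irrefl _ h

lemma LexLT.trans {n : ℕ} {a b c : Mon n} : LexLT a b → LexLT b c → LexLT a c := by
  rintro ⟨i, hi, hi'⟩ ⟨k, hk, hk'⟩
  rcases lt_trichotomy i k with h | rfl | h
  · exact ⟨i, fun j hj => (hi j hj).trans (hk j (hj.trans h)), hk i h ▸ hi'⟩
  · exact ⟨i, fun j hj => (hi j hj).trans (hk j hj), hi'.trans hk'⟩
  · exact ⟨k, fun j hj => (hi j (hj.trans h)).trans (hk j hj), (hi k h).symm ▸ hk'⟩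

lemma LexLT.total {n : ℕ} {a b : Mon n} (hab : a ≠ b) : LexLT a b ∨ LexLT b a := by
  have hex : (Finset.univ.filter fun i => a i ≠ b i).Nonempty := by
    obtain ⟨i, hi⟩ := DFunLike.ne_iff.mp hab
    exact ⟨i, by simpa using hi⟩
  obtain ⟨i, hi, hmin⟩ := Finset.exists_minimal hex
  have hi' : a i ≠ b i := by simpa using hi
  have heq : ∀ j, j < i → a j = b j := by
    intro j hj
    by_contra hne
    exact absurd (hmin (by simpa using hne) hj.le) (not_le.mpr hj)
  rcases lt_or_gt_of_ne hi' with h | h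
  · exact Or.inl ⟨i, heq, h⟩
  · exact Or.inr ⟨i, fun j hj => (heq j hj).symm, h⟩

lemma LexLE.apply_zero_le {n : ℕ} {a b : Mon n} {z : Fin n} (hz : z.val = 0)
    (h : LexLE a b) : a z ≤ b z := by
  rcases h with rfl | ⟨i, hi, hi'⟩
  · exact le_rfl
  · rcases Nat.eq_zero_or_pos i.val with h | h
    · exact (Fin.ext (h.trans hz.symm) : i = z) ▸ hi'.le
    · exact (hi z (Fin.lt_def.mpr (hz ▸ h))).le

lemma mdeg_add {n : ℕ} (a b : Mon n) : mdeg (a + b) = mdeg a + mdeg b := by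
  simp [mdeg, Finset.sum_add_distrib]

lemma mdeg_single {n : ℕ} (i : Fin n) (c : ℕ) : mdeg (Finsupp.single i c) = c := by
  simp [mdeg, Finsupp.single_apply]

/-- `x_1^a x_2^{d-a}` and `x_1^a x_n^{d-a}` are the lexicographically largest and smallest
monomials of degree `d` with `x_1`-exponent `a`. The indices of `x_1`, `x_2`, `x_n` are
`z`, `s`, `l`. -/
lemma mem_LSeg_iff {n : ℕ} (hn : 2 ≤ n) {a d : ℕ} (had : a ≤ d) {z s l : Fin n}
    (hz : z.val = 0) (hs : s.val = 1) (hl : l.val = n - 1) (w : Mon n) :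
    w ∈ LSeg (Finsupp.single z a + Finsupp.single s (d - a))
      (Finsupp.single z a + Finsupp.single l (d - a)) d ↔ mdeg w = d ∧ w z = a := by
  have hsz : z ≠ s := fun h => by rw [h] at hz; omega
  have hlz : z ≠ l := fun h => by rw [h] at hz; omega
  constructor
  · rintro ⟨hd, hu, hv⟩
    have h1 := hu.apply_zero_le hz
    have h2 := hv.apply_zero_le hz
    simp [hsz, hlz] at h1 h2
    exact ⟨hd, le_antisymm h1 h2⟩
  · rintro ⟨hd, h0⟩
    refine ⟨hd, ?_, ?_⟩
    · refine or_iff_not_imp_left.mpr fun hne => (LexLT.total hne).resolve_right ?_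
      rintro ⟨i, hi, hi'⟩
      obtain ⟨p, hp, hp'⟩ := exists_lt_of_first_diff
        (by rw [mdeg_add, mdeg_single, mdeg_single, hd]; omega) hi hi'
      have hi0 : i ≠ z := by
        rintro rfl
        simp [h0, hsz] at hi'
      have hiv : i.val ≠ z.val := fun h => hi0 (Fin.ext h)
      have hip : i.val < p.val := hp
      have e0 : z ≠ p := fun h => by rw [← h] at hip; omega
      have e1 : s ≠ p := fun h => by rw [← h] at hip; omega
      simp [e0, e1] at hp'
    · refine or_iff_not_imp_left.mpr fun hne => (LexLT.total hne).resolve_right ?_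
      rintro ⟨i, hi, hi'⟩
      obtain ⟨p, hp, -⟩ := exists_lt_of_first_diff
        (by rw [mdeg_add, mdeg_single, mdeg_single, hd]; omega) hi hi'
      have hip : i.val < p.val := hp
      have e0 : z ≠ i := by
        rintro rfl
        simp [h0, hlz] at hi'
      have e1 : l ≠ i := fun h => by
        rw [h] at hl
        have := p.isLt
        omega
      simp [e0, e1] at hi'

/-- for `0 < a ≤ d`, `u = x_1^a x_2^{d-a}` and `v = x_1^a x_n^{d-a}`, every
power `I^N`, `N ≥ 1`, of the lexsegment ideal `I = (L(u,v))` has linear quotients. -/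
theorem stmt7 {n : ℕ} (hn : 2 ≤ n) (a d : ℕ) (ha : 0 < a) (had : a ≤ d)
    (u v : Mon n)
    (hu : u = Finsupp.single (⟨0, by omega⟩ : Fin n) a +
      Finsupp.single (⟨1, by omega⟩ : Fin n) (d - a))
    (hv : v = Finsupp.single (⟨0, by omega⟩ : Fin n) a +
      Finsupp.single (⟨n - 1, by omega⟩ : Fin n) (d - a)) :
    ∀ N : ℕ, 1 ≤ N → HasLinQuot (prodSet (LSeg u v d) N) := by
  intro N _
  have hB : ∀ w : Mon n, w ∈ LSeg u v d ↔ mdeg w = d ∧ w ⟨0, by omega⟩ = a := by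
    subst hu hv
    exact mem_LSeg_iff hn had rfl rfl rfl
  have hG : ∀ m ∈ prodSet (LSeg u v d) N, mdeg m = N * d ∧ m ⟨0, by omega⟩ = N * a := by
    rintro m ⟨f, hf, rfl⟩
    constructor
    · unfold mdeg
      simp only [Finsupp.finsetSum_apply]
      rw [Finset.sum_comm]
      simp [fun i => show ∑ x, f i x = d from ((hB _).1 (hf i)).1]
    · simp [Finsupp.finsetSum_apply, fun i => ((hB _).1 (hf i)).2]
  refine ⟨fun x y => LexLT y x, fun x _ => LexLT.irrefl x,
    fun x _ y _ z _ hxy hyz => hyz.trans hxy, fun x _ y _ hxy => (LexLT.total hxy).symm, ?_⟩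
  rintro uj hj ui hi ⟨q, hq, hq'⟩
  have hdeg : mdeg ui = mdeg uj := by rw [(hG _ hi).1, (hG _ hj).1]
  obtain ⟨p, hqp, hp⟩ := exists_lt_of_first_diff hdeg hq hq'
  have hzero : ui ⟨0, by omega⟩ = uj ⟨0, by omega⟩ := by rw [(hG _ hi).2, (hG _ hj).2]
  have hq0 : q ≠ ⟨0, by omega⟩ := by
    intro h
    rw [h] at hq'
    omega
  have hp0 : p ≠ ⟨0, by omega⟩ := by
    intro h
    rw [h] at hqp
    exact absurd (Fin.lt_def.mp hqp) (Nat.not_lt_zero _)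
  obtain ⟨f, hf, rfl⟩ := hi
  -- Some factor `f r` of `ui` is divisible by `x_p`; write it as `x_p * g`.
  obtain ⟨r, hr⟩ : ∃ r, f r p ≠ 0 := by
    by_contra! hc
    simp [Finsupp.finsetSum_apply, hc] at hp
  obtain ⟨g, hg⟩ : ∃ g, f r = Finsupp.single p 1 + g :=
    exists_add_of_le (by simpa [Finsupp.single_le_iff] using Nat.one_le_iff_ne_zero.mpr hr)
  have hfr := (hB _).1 (hf r)
  rw [hg, mdeg_add, mdeg_single] at hfr
  -- `uk * x_p = ui * x_q`
  have key : (∑ i, Function.update f r (Finsupp.single q 1 + g) i) + Finsupp.single p 1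
      = (∑ i, f i) + Finsupp.single q 1 := by
    rw [Finset.sum_update_of_mem (Finset.mem_univ r),
      ← Finset.add_sum_erase Finset.univ f (Finset.mem_univ r), hg, Finset.sdiff_singleton_eq_erase]
    abel
  set uk := ∑ i, Function.update f r (Finsupp.single q 1 + g) i with huk
  have hval : ∀ t, uk t + Finsupp.single p 1 t = (∑ i, f i) t + Finsupp.single q 1 t := fun t => by
    rw [← Finsupp.add_apply, key, Finsupp.add_apply]
  have hukq : uk q = (∑ i, f i) q + 1 := by
    simpa [Finsupp.single_apply, hqp.ne'] using hval q
  refine ⟨uk, ⟨_, fun i => ?_, huk⟩, ⟨q, fun j hjq => ?_, by omega⟩, q, fun t ht => ?_, hukq, hq'⟩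
  · by_cases hir : i = r
    · subst hir
      rw [Function.update_self, hB, mdeg_add, mdeg_single]
      refine ⟨hfr.1, ?_⟩
      simpa [Finsupp.single_apply, hq0, hp0] using hfr.2
    · rw [Function.update_of_ne hir]
      exact hf i
  · have := hval j
    rw [Finsupp.single_eq_of_ne (hjq.trans hqp).ne, Finsupp.single_eq_of_ne hjq.ne] at this
    omega
  · have := hval t
    rw [Finsupp.single_eq_of_ne (a := q) ht] at this
    omega
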